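/- arXiv:1212.1644 — 3 statements merged into one kernel-verified Lean document; each statement's English description precedes it below -/
import Mathlib

section
/- Let x and s be real numbers with |x| ≤ 1 and s > 1. Then ∑_{n=1}^∞ x^{ω(n)} / n^s = ∏_{p prime} (1 + ∑_{j=1}^∞ x / p^{j·s}), where the product runs over all primes and both the series and the infinite product converge. -/
/-!
A multiplicative function is absolutely summable as soon as it is so over the prime powers: its
sum over the `N`-smooth numbers is a product of local factors `1 + aₚ`, which is at most
`exp (∑ₚ aₚ)`. On prime powers `x ^ ω` is the constant `x`, so twisting an absolutely summable
multiplicative function by `x ^ ω` preserves absolute summability for every `x`, whatever its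
size, and the Euler product of the twist has local factors `1 + ∑ⱼ x * g (p ^ (j + 1))`.
-/

section EulerProduct

open ArithmeticFunction Finset
open scoped ArithmeticFunction.omega

variable {F : Type*} [NormedField F]

theorem tsum_pow_eq_one_add {R : Type*} [AddCommGroupWithOne R] [TopologicalSpace R]
    [IsTopologicalAddGroup R] [T2Space R] {f : ℕ → R} (hf₁ : f 1 = 1) {m : ℕ}
    (hsum : Summable fun k ↦ f (m ^ k)) :
    ∑' k, f (m ^ k) = 1 + ∑' k, f (m ^ (k + 1)) := by
  rw [hsum.tsum_eq_zero_add, pow_zero, hf₁]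

theorem prod_one_add_le_exp_tsum_subtype {ι : Type*} {a : ι → ℝ} (ha : ∀ i, 0 ≤ a i)
    {q : ι → Prop} (hsum : Summable fun i : Subtype q ↦ a i) {t : Finset ι} (ht : ∀ i ∈ t, q i) :
    ∏ i ∈ t, (1 + a i) ≤ Real.exp (∑' i : Subtype q, a i) := by
  classical
  refine (Real.prod_one_add_le_exp_sum _ ha).trans (Real.exp_le_exp.2 ?_)
  rw [← sum_subtype_of_mem a ht]
  exact hsum.sum_le_tsum _ fun i _ ↦ ha i

theorem sum_range_le_tsum_smoothNumbers {f : ℕ → ℝ} (hf : ∀ n, 0 ≤ f n) (hf₀ : f 0 = 0) {N : ℕ}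
    (hsum : Summable fun m : N.smoothNumbers ↦ f m) :
    ∑ n ∈ range N, f n ≤ ∑' m : N.smoothNumbers, f m := by
  rw [_root_.tsum_subtype]
  calc ∑ n ∈ range N, f n = ∑ n ∈ range N, N.smoothNumbers.indicator f n := by
        refine sum_congr rfl fun n hn ↦ ?_
        rcases n.eq_zero_or_pos with rfl | hpos
        · simp [Set.indicator_apply, hf₀]
        · rw [Set.indicator_of_mem (Nat.mem_smoothNumbers_of_lt hpos (mem_range.1 hn))]
    _ ≤ ∑' n, N.smoothNumbers.indicator f n :=
        (summable_subtype_iff_indicator.1 hsum).sum_le_tsum _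
          fun n _ ↦ Set.indicator_nonneg (fun m _ ↦ hf m) n

theorem summable_norm_of_summable_norm_isPrimePow {f : ArithmeticFunction F}
    (hf : f.IsMultiplicative) (hsum : Summable fun q : {n : ℕ // IsPrimePow n} ↦ ‖f q‖) :
    Summable (‖f ·‖) := by
  have hpair : Summable fun pk : Nat.Primes × ℕ ↦ ‖f (pk.1 ^ (pk.2 + 1))‖ :=
    Nat.Primes.prodNatEquiv.summable_iff.2 hsum
  have hlocal {p : ℕ} (hp : p.Prime) : Summable fun k ↦ ‖f (p ^ k)‖ :=
    (summable_nat_add_iff (f := fun k ↦ ‖f (p ^ k)‖) 1).1 (hpair.prod_factor ⟨p, hp⟩)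
  have hf₁ : ‖f 1‖ = 1 := by rw [hf.map_one, norm_one]
  let a (p : ℕ) : ℝ := ∑' k, ‖f (p ^ (k + 1))‖
  have ha (p : ℕ) : 0 ≤ a p := tsum_nonneg fun _ ↦ norm_nonneg _
  refine summable_of_sum_range_le (c := Real.exp (∑' p : Nat.Primes, a p))
    (fun _ ↦ norm_nonneg _) fun N ↦ ?_
  obtain ⟨hsmooth, hsmooth_prod⟩ :=
    EulerProduct.summable_and_hasSum_smoothNumbers_prod_primesBelow_tsum (f := fun n ↦ ‖f n‖) hf₁
      (fun hmn ↦ by rw [hf.map_mul_of_coprime hmn, norm_mul])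
      (fun hp ↦ (hlocal hp).norm) N
  calc ∑ n ∈ range N, ‖f n‖ ≤ ∑' m : N.smoothNumbers, ‖f m‖ :=
        sum_range_le_tsum_smoothNumbers (fun _ ↦ norm_nonneg _) (by simp) hsmooth.of_norm
    _ = ∏ p ∈ N.primesBelow, (1 + a p) :=
        hsmooth_prod.tsum_eq.trans <| prod_congr rfl fun p hp ↦
          tsum_pow_eq_one_add (f := fun n ↦ ‖f n‖) hf₁ (hlocal (Nat.prime_of_mem_primesBelow hp))
    _ ≤ Real.exp (∑' p : Nat.Primes, a p) :=
        prod_one_add_le_exp_tsum_subtype ha hpair.prod fun _ ↦ Nat.prime_of_mem_primesBelow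

/-- The twist `n ↦ x ^ ω n * g n` of an arithmetic function `g` by the multiplicative
function `x ^ ω`. -/
def omegaTwist {R : Type*} [CommSemiring R] (x : R) (g : ArithmeticFunction R) :
    ArithmeticFunction R where
  toFun n := x ^ ω n * g n
  map_zero' := by rw [g.map_zero, mul_zero]

section CommSemiring

variable {R : Type*} [CommSemiring R] (x : R)

theorem omegaTwist_apply (g : ArithmeticFunction R) (n : ℕ) :
    omegaTwist x g n = x ^ ω n * g n := rfl

theorem omegaTwist_apply_of_isPrimePow (g : ArithmeticFunction R) {q : ℕ} (hq : IsPrimePow q) :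
    omegaTwist x g q = x * g q := by
  rw [omegaTwist_apply, cardDistinctFactors_eq_one_iff.2 hq, pow_one]

theorem isMultiplicative_omegaTwist {g : ArithmeticFunction R} (hg : g.IsMultiplicative) :
    (omegaTwist x g).IsMultiplicative := by
  refine ⟨by rw [omegaTwist_apply, cardDistinctFactors_one, pow_zero, one_mul, hg.map_one],
    fun {m n} hmn ↦ ?_⟩
  simp only [omegaTwist_apply, cardDistinctFactors_mul hmn, hg.map_mul_of_coprime hmn, pow_add]
  exact mul_mul_mul_comm _ _ _ _

end CommSemiring

variable (x : F) {g : ArithmeticFunction F}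

theorem summable_norm_omegaTwist (hg : g.IsMultiplicative) (hsum : Summable (‖g ·‖)) :
    Summable (‖omegaTwist x g ·‖) := by
  refine summable_norm_of_summable_norm_isPrimePow (isMultiplicative_omegaTwist x hg) ?_
  simp only [fun q : {n // IsPrimePow n} ↦ omegaTwist_apply_of_isPrimePow x g q.2, norm_mul]
  exact (hsum.subtype _).mul_left ‖x‖

theorem eulerProduct_hasProd_omegaTwist [CompleteSpace F] (hg : g.IsMultiplicative)
    (hsum : Summable (‖g ·‖)) :
    HasProd (fun p : Nat.Primes ↦ 1 + ∑' j : ℕ, x * g (p ^ (j + 1)))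
      (∑' n, omegaTwist x g n) := by
  have hmul := isMultiplicative_omegaTwist x hg
  have htwist := summable_norm_omegaTwist x hg hsum
  convert hmul.eulerProduct_hasProd htwist using 2 with p
  have hpow : Summable fun k ↦ omegaTwist x g (p ^ k) :=
    htwist.of_norm.comp_injective (Nat.pow_right_injective p.prop.two_le)
  rw [tsum_pow_eq_one_add hmul.map_one hpow]
  congr! 3 with j
  exact (omegaTwist_apply_of_isPrimePow x g (p.prop.isPrimePow.pow j.succ_ne_zero)).symm

end EulerProduct

/-- The arithmetic function `n ↦ 1 / n ^ s` with real exponent. Its value at `0` is set to `0`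
explicitly, since `(0 : ℝ) ^ (0 : ℝ) = 1`. -/
noncomputable def invRpow (s : ℝ) : ArithmeticFunction ℝ where
  toFun n := if n = 0 then 0 else ((n : ℝ) ^ s)⁻¹
  map_zero' := if_pos rfl

theorem invRpow_apply {n : ℕ} (s : ℝ) (hn : n ≠ 0) : invRpow s n = ((n : ℝ) ^ s)⁻¹ := if_neg hn

theorem isMultiplicative_invRpow (s : ℝ) : (invRpow s).IsMultiplicative := by
  refine ArithmeticFunction.IsMultiplicative.iff_ne_zero.2 ⟨?_, fun hm hn _ ↦ ?_⟩
  · rw [invRpow_apply s one_ne_zero, Nat.cast_one, Real.one_rpow, inv_one]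
  · rw [invRpow_apply s (mul_ne_zero hm hn), invRpow_apply s hm, invRpow_apply s hn, Nat.cast_mul,
      Real.mul_rpow (Nat.cast_nonneg _) (Nat.cast_nonneg _), mul_inv]

theorem summable_norm_invRpow {s : ℝ} (hs : 1 < s) : Summable (‖invRpow s ·‖) := by
  refine (Real.summable_nat_rpow_inv.2 hs).norm.congr_atTop ?_
  filter_upwards [Filter.eventually_ne_atTop 0] with n hn
  rw [invRpow_apply s hn]

theorem invRpow_apply_pow (s : ℝ) {m : ℕ} (hm : m ≠ 0) (k : ℕ) :
    invRpow s (m ^ k) = ((m : ℝ) ^ ((k : ℝ) * s))⁻¹ := by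
  rw [invRpow_apply s (pow_ne_zero k hm), Nat.cast_pow, Real.rpow_natCast_mul m.cast_nonneg]

theorem omegaTwist_invRpow_apply_succ (x s : ℝ) (n : ℕ) :
    omegaTwist x (invRpow s) (n + 1) =
      x ^ (n + 1).primeFactors.card / ((n + 1 : ℕ) : ℝ) ^ s := by
  rw [omegaTwist_apply, invRpow_apply s n.succ_ne_zero, div_eq_mul_inv]
  rfl

theorem stmt_7_general (x s : ℝ) (hs : 1 < s) :
    Summable (fun n : ℕ => x ^ (n + 1).primeFactors.card / ((n + 1 : ℕ) : ℝ) ^ s) ∧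
    Multipliable (fun p : Nat.Primes =>
      1 + ∑' j : ℕ, x / ((p : ℕ) : ℝ) ^ (((j + 1 : ℕ) : ℝ) * s)) ∧
    ∑' n : ℕ, x ^ (n + 1).primeFactors.card / ((n + 1 : ℕ) : ℝ) ^ s =
      ∏' p : Nat.Primes, (1 + ∑' j : ℕ, x / ((p : ℕ) : ℝ) ^ (((j + 1 : ℕ) : ℝ) * s)) := by
  have hmul := isMultiplicative_invRpow s
  have habs := summable_norm_invRpow hs
  have hsum := (summable_norm_omegaTwist x hmul habs).of_norm
  have hprod := eulerProduct_hasProd_omegaTwist x hmul habs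
  rw [hsum.tsum_eq_zero_add, ArithmeticFunction.map_zero, zero_add] at hprod
  simp only [omegaTwist_invRpow_apply_succ, ← div_eq_mul_inv,
    fun p : Nat.Primes ↦ invRpow_apply_pow s p.prop.ne_zero] at hprod
  refine ⟨?_, hprod.multipliable, hprod.tprod_eq.symm⟩
  simpa only [omegaTwist_invRpow_apply_succ] using (summable_nat_add_iff 1).2 hsum

/-- Euler-product identity: ∑ₙ x^(ω n)/n^s = ∏ₚ (1 + ∑ⱼ x / p^(j s)),
with both sides converging. -/
theorem stmt_7 (x s : ℝ) (hx : |x| ≤ 1) (hs : 1 < s) :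
    Summable (fun n : ℕ => x ^ (n + 1).primeFactors.card / ((n + 1 : ℕ) : ℝ) ^ s) ∧
    Multipliable (fun p : Nat.Primes =>
      1 + ∑' j : ℕ, x / ((p : ℕ) : ℝ) ^ (((j + 1 : ℕ) : ℝ) * s)) ∧
    ∑' n : ℕ, x ^ (n + 1).primeFactors.card / ((n + 1 : ℕ) : ℝ) ^ s =
      ∏' p : Nat.Primes, (1 + ∑' j : ℕ, x / ((p : ℕ) : ℝ) ^ (((j + 1 : ℕ) : ℝ) * s)) :=
  stmt_7_general x s hs
end

section
/- Let t be a positive natural number and let x, s be real numbers with |x| ≤ 1 and s > 1. Define L(n) = ∑_{p ∈ primeFactors(n)} (v_p(n))^t, the sum of the t-th powers of the exponents appearing in the unique factorization of n (so L(1) = 0). Then ∑_{n=1}^∞ x^{L(n)} / n^s = ∏_{p prime} (1 + ∑_{j=1}^∞ x^{j^t} / p^{j·s}), where the product runs over all primes and both the series and the infinite product converge. -/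
/-!
A multiplicative function can be prescribed by arbitrary values `a p e` at the prime powers `p ^ e`,
`e ≠ 0`. When these values have norm at most one, twisting by a completely multiplicative function
`w` with absolutely summable values gives an absolutely summable multiplicative function, whose
Euler factor at `p` is `1 + ∑ a p e * w p ^ e`. The identity for `x ^ L n / n ^ s` is the case
`a p e = x ^ (e ^ t)`, `w n = n ^ (-s)`.
-/

section EulerProduct

variable {M R : Type*} [CommMonoid M] [NormedCommRing R]

theorem factorization_prod_mul_of_coprime (a : ℕ → ℕ → M) {m n : ℕ} (h : m.Coprime n) :
    (m * n).factorization.prod a = m.factorization.prod a * n.factorization.prod a := by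
  rw [Nat.factorization_mul_of_coprime h]
  exact Finsupp.prod_add_index_of_disjoint h.disjoint_primeFactors a

theorem factorization_prod_prime_pow_succ (a : ℕ → ℕ → M) {p : ℕ} (hp : p.Prime) (j : ℕ) :
    (p ^ (j + 1)).factorization.prod a = a p (j + 1) := by
  rw [Nat.prod_factorization_eq_prod_primeFactors, Nat.primeFactors_prime_pow j.succ_ne_zero hp,
    Finset.prod_singleton, hp.factorization_pow, Finsupp.single_eq_same]

theorem norm_factorization_prod_le_one [NormOneClass R] {a : ℕ → ℕ → R}
    (ha : ∀ p e, ‖a p e‖ ≤ 1) (n : ℕ) : ‖n.factorization.prod a‖ ≤ 1 :=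
  (Finset.norm_prod_le _ _).trans <|
    Finset.prod_le_one (fun _ _ => norm_nonneg _) fun p _ => ha p (n.factorization p)

theorem summable_norm_factorization_prod_mul [NormOneClass R] {a : ℕ → ℕ → R}
    (ha : ∀ p e, ‖a p e‖ ≤ 1) {w : ℕ → R} (hw : Summable (‖w ·‖)) :
    Summable fun n => ‖n.factorization.prod a * w n‖ :=
  hw.of_nonneg_of_le (fun _ => norm_nonneg _) fun n =>
    (norm_mul_le _ _).trans <|
      mul_le_of_le_one_left (norm_nonneg _) (norm_factorization_prod_le_one ha n)

variable [CompleteSpace R]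

theorem tsum_factorization_prod_mul_prime_pow {a : ℕ → ℕ → R} {w : ℕ →*₀ R}
    (h : Summable fun n => ‖n.factorization.prod a * w n‖) {p : ℕ} (hp : p.Prime) :
    ∑' e, (p ^ e).factorization.prod a * w (p ^ e) = 1 + ∑' j, a p (j + 1) * w p ^ (j + 1) := by
  have hsum : Summable fun e => (p ^ e).factorization.prod a * w (p ^ e) :=
    h.of_norm.comp_injective (Nat.pow_right_injective hp.two_le)
  rw [hsum.tsum_eq_zero_add]
  simp only [factorization_prod_prime_pow_succ a hp, map_pow, pow_zero, Nat.factorization_one,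
    Finsupp.prod_zero_index, map_one, one_mul]

theorem hasProd_one_add_tsum_mul_pow {a : ℕ → ℕ → R} {w : ℕ →*₀ R}
    (h : Summable fun n => ‖n.factorization.prod a * w n‖) :
    HasProd (fun p : Nat.Primes => 1 + ∑' j, a p (j + 1) * w p ^ (j + 1))
      (∑' n, n.factorization.prod a * w n) := by
  simp_rw [← fun p : Nat.Primes => tsum_factorization_prod_mul_prime_pow h p.prop]
  refine EulerProduct.eulerProduct_hasProd (by simp) (fun {m n} hmn => ?_) h (by simp)
  rw [factorization_prod_mul_of_coprime a hmn, map_mul, mul_mul_mul_comm]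

theorem stmt_10_general [NormOneClass R] {a : ℕ → ℕ → R} (ha : ∀ p e, ‖a p e‖ ≤ 1)
    {w : ℕ →*₀ R} (hw : Summable (‖w ·‖)) :
    Summable (fun n : ℕ => (n + 1).factorization.prod a * w (n + 1)) ∧
    Multipliable (fun p : Nat.Primes => 1 + ∑' j : ℕ, a p (j + 1) * w p ^ (j + 1)) ∧
    ∑' n : ℕ, (n + 1).factorization.prod a * w (n + 1) =
      ∏' p : Nat.Primes, (1 + ∑' j : ℕ, a p (j + 1) * w p ^ (j + 1)) := by
  have hsum := summable_norm_factorization_prod_mul ha hw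
  have hprod := hasProd_one_add_tsum_mul_pow hsum
  rw [hsum.of_norm.tsum_eq_zero_add, map_zero, mul_zero, zero_add] at hprod
  exact ⟨(summable_nat_add_iff 1).mpr hsum.of_norm, hprod.multipliable, hprod.tprod_eq.symm⟩

end EulerProduct

section RealPower

/-- The completely multiplicative function `n ↦ n ^ (-s)` for a real exponent `s`, the weight of a
Dirichlet series. The case `s = 0` is excluded because `0 ^ 0 = 1`. -/
noncomputable def rpowNegHom {s : ℝ} (hs : s ≠ 0) : ℕ →*₀ ℝ where
  toFun n := (n : ℝ) ^ (-s)
  map_zero' := by rw [Nat.cast_zero, Real.zero_rpow (neg_ne_zero.mpr hs)]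
  map_one' := by rw [Nat.cast_one, Real.one_rpow]
  map_mul' m n := by rw [Nat.cast_mul, Real.mul_rpow m.cast_nonneg n.cast_nonneg]

variable {s : ℝ}

theorem rpowNegHom_apply (hs : s ≠ 0) (n : ℕ) : rpowNegHom hs n = ((n : ℝ) ^ s)⁻¹ :=
  Real.rpow_neg n.cast_nonneg s

theorem rpowNegHom_apply_pow (hs : s ≠ 0) (n k : ℕ) :
    rpowNegHom hs n ^ k = ((n : ℝ) ^ ((k : ℝ) * s))⁻¹ := by
  rw [rpowNegHom_apply, inv_pow, mul_comm, Real.rpow_mul_natCast n.cast_nonneg]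

theorem summable_norm_rpowNegHom (hs : 1 < s) :
    Summable (‖rpowNegHom (zero_lt_one.trans hs).ne' ·‖) := by
  simp_rw [rpowNegHom_apply]
  exact (Real.summable_nat_rpow_inv.mpr hs).norm

end RealPower

/-- Euler-product identity for x^(L n) / n^s, where L(n) is the sum of the t-th powers
of the exponents in the prime factorization of n. -/
theorem stmt_10 (t : ℕ) (ht : 0 < t) (x s : ℝ) (hx : |x| ≤ 1) (hs : 1 < s) :
    Summable (fun n : ℕ =>
      x ^ (∑ p ∈ (n + 1).primeFactors, ((n + 1).factorization p) ^ t) /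
        ((n + 1 : ℕ) : ℝ) ^ s) ∧
    Multipliable (fun p : Nat.Primes =>
      1 + ∑' j : ℕ, x ^ ((j + 1) ^ t) / ((p : ℕ) : ℝ) ^ (((j + 1 : ℕ) : ℝ) * s)) ∧
    ∑' n : ℕ, x ^ (∑ p ∈ (n + 1).primeFactors, ((n + 1).factorization p) ^ t) /
        ((n + 1 : ℕ) : ℝ) ^ s =
      ∏' p : Nat.Primes,
        (1 + ∑' j : ℕ, x ^ ((j + 1) ^ t) / ((p : ℕ) : ℝ) ^ (((j + 1 : ℕ) : ℝ) * s)) := by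
  have ha (_ e : ℕ) : ‖x ^ (e ^ t)‖ ≤ 1 := (norm_pow x _).trans_le (pow_le_one₀ (norm_nonneg x) hx)
  simpa only [Nat.prod_factorization_eq_prod_primeFactors, Finset.prod_pow_eq_pow_sum,
    ↓rpowNegHom_apply_pow, rpowNegHom_apply, ← div_eq_mul_inv] using
    stmt_10_general ha (summable_norm_rpowNegHom hs)
end

section
/- Let x be a real number with |x| < 1. For a natural number m, let S(m) denote the number of pairs (a, b) of integers with a² + b² = m (this set of pairs is finite). Then the family (x^{a² + b²})_{(a,b) ∈ ℤ×ℤ} is summable, the family (S(m)·x^m)_{m ∈ ℕ} is summable, and ∑_{(a,b) ∈ ℤ×ℤ} x^{a² + b²} = ∑_{m=0}^∞ S(m)·x^m; in particular (∑_{n ∈ ℤ} x^{n²})² = ∑_{m=0}^∞ S(m)·x^m. -/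
/-- S(m): the number of representations of m as a sum of two squares of integers. -/
noncomputable def twoSquareReps (m : ℕ) : ℕ :=
  Nat.card {q : ℤ × ℤ // q.1 ^ 2 + q.2 ^ 2 = (m : ℤ)}

lemma hasSum_card_fiber_nsmul {ι κ M : Type*} [AddCommMonoid M] [TopologicalSpace M]
    [ContinuousAdd M] [RegularSpace M] {w : ι → κ} [∀ k, Finite {i // w i = k}]
    {f : κ → M} {s : M} (hf : HasSum (fun i => f (w i)) s) :
    HasSum (fun k => Nat.card {i // w i = k} • f k) s := by
  refine ((Equiv.sigmaFiberEquiv w).hasSum_iff.mpr hf).sigma fun k => ?_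
  have := Fintype.ofFinite {i // w i = k}
  have hconst : (fun i : {i // w i = k} => f (w i)) = fun _ => f k :=
    funext fun i => congrArg f i.2
  simpa [hconst] using hasSum_fintype fun i : {i // w i = k} => f (w i)

lemma finite_setOf_sq_add_sq_eq (n : ℤ) : {q : ℤ × ℤ | q.1 ^ 2 + q.2 ^ 2 = n}.Finite := by
  have hbound {a b : ℤ} (hab : a ^ 2 + b ^ 2 = n) : |a| ≤ n := by
    linarith [Int.le_self_sq |a|, sq_abs a, sq_nonneg b]
  refine ((Set.finite_Icc (-n) n).prod (Set.finite_Icc (-n) n)).subset fun q hq => ?_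
  exact ⟨abs_le.mp (hbound hq), abs_le.mp (hbound ((add_comm _ _).trans hq))⟩

lemma toNat_sq_add_sq_eq_iff {a b : ℤ} {m : ℕ} :
    (a ^ 2 + b ^ 2).toNat = m ↔ a ^ 2 + b ^ 2 = m := by
  have : 0 ≤ a ^ 2 + b ^ 2 := by positivity
  lia

lemma pow_toNat_add {M : Type*} [Monoid M] (x : M) {a b : ℤ} (ha : 0 ≤ a) (hb : 0 ≤ b) :
    x ^ (a + b).toNat = x ^ a.toNat * x ^ b.toNat := by
  rw [Int.toNat_add ha hb, pow_add]

section NormedRing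

variable {R : Type*} [NormedRing R]

lemma summable_norm_pow_toNat_sq {x : R} (hx : ‖x‖ < 1) :
    Summable (fun n : ℤ => ‖x ^ (n ^ 2).toNat‖) := by
  have hnat : Summable (fun n : ℕ => ‖x ^ ((n : ℤ) ^ 2).toNat‖) := by
    simpa only [Int.toNat_pow_of_nonneg (Int.natCast_nonneg _), Int.toNat_natCast,
      Function.comp_def] using
      (summable_norm_geometric_of_norm_lt_one hx).comp_injective
        (Nat.pow_left_injective two_ne_zero)
  exact hnat.of_nat_of_neg (by simpa only [neg_sq] using hnat)

variable [CompleteSpace R]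

lemma hasSum_mul_of_summable_norm {ι κ : Type*} {f : ι → R} {g : κ → R}
    (hf : Summable (fun i => ‖f i‖)) (hg : Summable (fun j => ‖g j‖)) :
    HasSum (fun p : ι × κ => f p.1 * g p.2) ((∑' i, f i) * ∑' j, g j) :=
  hf.of_norm.hasSum.mul hg.of_norm.hasSum (summable_mul_of_summable_norm hf hg)

lemma hasSum_pow_toNat_sq_add_sq {x : R} (hx : ‖x‖ < 1) :
    HasSum (fun q : ℤ × ℤ => x ^ (q.1 ^ 2 + q.2 ^ 2).toNat)
      ((∑' n : ℤ, x ^ (n ^ 2).toNat) ^ 2) := by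
  have hnorm := summable_norm_pow_toNat_sq hx
  simpa only [pow_toNat_add x (sq_nonneg _) (sq_nonneg _), sq (tsum _)] using
    hasSum_mul_of_summable_norm hnorm hnorm

lemma hasSum_twoSquareReps_mul_pow {x : R} (hx : ‖x‖ < 1) :
    HasSum (fun m : ℕ => (twoSquareReps m : R) * x ^ m)
      ((∑' n : ℤ, x ^ (n ^ 2).toNat) ^ 2) := by
  have hfinite (m : ℕ) : Finite {q : ℤ × ℤ // (q.1 ^ 2 + q.2 ^ 2).toNat = m} := by
    simpa only [toNat_sq_add_sq_eq_iff, Set.coe_ofPred] using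
      (finite_setOf_sq_add_sq_eq m).to_subtype
  simpa only [twoSquareReps, toNat_sq_add_sq_eq_iff, nsmul_eq_mul] using
    hasSum_card_fiber_nsmul (hasSum_pow_toNat_sq_add_sq hx)

theorem stmt_13_general (x : R) (hx : ‖x‖ < 1) :
    Summable (fun q : ℤ × ℤ => x ^ (q.1 ^ 2 + q.2 ^ 2).toNat) ∧
    Summable (fun m : ℕ => (twoSquareReps m : R) * x ^ m) ∧
    ∑' q : ℤ × ℤ, x ^ (q.1 ^ 2 + q.2 ^ 2).toNat =
      ∑' m : ℕ, (twoSquareReps m : R) * x ^ m ∧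
    (∑' n : ℤ, x ^ (n ^ 2).toNat) ^ 2 = ∑' m : ℕ, (twoSquareReps m : R) * x ^ m := by
  have hpairs := hasSum_pow_toNat_sq_add_sq hx
  have hreps := hasSum_twoSquareReps_mul_pow hx
  exact ⟨hpairs.summable, hreps.summable, hpairs.tsum_eq.trans hreps.tsum_eq.symm,
    hreps.tsum_eq.symm⟩

end NormedRing

/-- The square of the theta series ∑_{n ∈ ℤ} x^(n²) is the generating function of S. -/
theorem stmt_13 (x : ℝ) (hx : |x| < 1) :
    Summable (fun q : ℤ × ℤ => x ^ (q.1 ^ 2 + q.2 ^ 2).toNat) ∧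
    Summable (fun m : ℕ => (twoSquareReps m : ℝ) * x ^ m) ∧
    ∑' q : ℤ × ℤ, x ^ (q.1 ^ 2 + q.2 ^ 2).toNat =
      ∑' m : ℕ, (twoSquareReps m : ℝ) * x ^ m ∧
    (∑' n : ℤ, x ^ (n ^ 2).toNat) ^ 2 = ∑' m : ℕ, (twoSquareReps m : ℝ) * x ^ m :=
  stmt_13_general x hx
end
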